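/- Let n ≥ 0 and let κ = (κ_1,…,κ_ℓ) ∈ Z^ℓ satisfy κ_l − κ_{l+1} > n for 1 ≤ l < ℓ, and let λ be an ℓ-multipartition of n. Then in the polynomial ring Z[t] the following identity holds: [λ]!_t · ∏_{1≤l<m≤ℓ} ∏_{(l,r,c)∈[λ]} [κ_l − r + c − κ_m]_t = ∏_{e≥2} Φ_e(t)^{deg_e(t^λ)}, where the product on the right is over all integers e ≥ 2, Φ_e(t) is the e-th cyclotomic polynomial, and deg_e(t^λ) = 0 for all but finitely many e. (This identifies the seminormal coefficient γ_{t^λ} attached to the Murphy basis as a product of cyclotomic polynomials.) -/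

import Mathlib

open scoped BigOperators
open scoped Classical

namespace Paper

/-! ## Quantum integers -/

/-- The quantum integer `[d]_x` in a field, for `d ∈ ℤ`. -/
noncomputable def qint {K : Type*} [Field K] (x : K) (d : ℤ) : K :=
  if 0 ≤ d then ∑ k ∈ Finset.range d.toNat, x ^ k
  else -∑ k ∈ Finset.range (-d).toNat, x ^ (-((k : ℤ) + 1))

/-- The quantum integer `[d]_t` in a commutative ring, for an invertible `t` and `d ∈ ℤ`. -/
def qintU {O : Type*} [CommRing O] (t : Oˣ) (d : ℤ) : O :=
  if 0 ≤ d then ∑ k ∈ Finset.range d.toNat, (t : O) ^ k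
  else -∑ k ∈ Finset.range (-d).toNat, ((t ^ (-((k : ℤ) + 1)) : Oˣ) : O)

/-! ## Nodes, multipartitions and standard tableaux -/

/-- A node `(l, r, c)`: component `l`, row `r`, column `c` (all `0`-based). -/
abbrev Node : Type := ℕ × ℕ × ℕ

/-- `nodeBelow A B` holds when `B` is strictly below `A`, i.e. `A < B` lexicographically. -/
def nodeBelow (A B : Node) : Prop :=
  A.1 < B.1 ∨ (A.1 = B.1 ∧ (A.2.1 < B.2.1 ∨ (A.2.1 = B.2.1 ∧ A.2.2 < B.2.2)))

/-- An `ℓ`-multipartition of `n`. -/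
structure Multipartition (ℓ n : ℕ) : Type where
  part : ℕ → ℕ → ℕ
  comp_bound : ∀ l, ℓ ≤ l → ∀ r, part l r = 0
  antitone : ∀ l, Antitone (part l)
  row_bound : ∀ l r, n ≤ r → part l r = 0
  size : (∑ l ∈ Finset.range ℓ, ∑ r ∈ Finset.range n, part l r) = n

/-- The diagram of a multipartition. -/
def Multipartition.diagram {ℓ n : ℕ} (μ : Multipartition ℓ n) : Set Node :=
  {A | A.2.2 < μ.part A.1 A.2.1}

/-- A standard tableau: a bijection from the diagram of its shape onto `{1, …, n}`
that increases along rows and down columns of each component (it takes the value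
`0` off the diagram, so that it is determined by its entries). -/
structure StdTableau (ℓ n : ℕ) : Type where
  shape : Multipartition ℓ n
  entry : Node → ℕ
  entry_zero : ∀ A, A ∉ shape.diagram → entry A = 0
  bijOn : Set.BijOn entry shape.diagram (Set.Icc 1 n)
  row_inc : ∀ l r c, (l, r, c + 1) ∈ shape.diagram → entry (l, r, c) < entry (l, r, c + 1)
  col_inc : ∀ l r c, (l, r + 1, c) ∈ shape.diagram → entry (l, r, c) < entry (l, r + 1, c)

/-- The node of a standard tableau containing the entry `k`. -/
noncomputable def StdTableau.node {ℓ n : ℕ} (T : StdTableau ℓ n) (k : ℕ) : Node :=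
  Function.invFunOn T.entry T.shape.diagram k

/-- The content `c_k(T) = κ_l + c - r` of the entry `k` in the tableau `T`
(`1 ≤ k ≤ n`). -/
noncomputable def content {ℓ n : ℕ} (κ : ℕ → ℤ) (T : StdTableau ℓ n) (k : ℕ) : ℤ :=
  κ (T.node k).1 + ((T.node k).2.2 : ℤ) - ((T.node k).2.1 : ℤ)

/-- The residue sequence of a standard tableau, in `I^n` with `I = ℤ/eℤ`. -/
noncomputable def resSeq {ℓ n : ℕ} (e : ℕ) (κ : ℕ → ℤ) (T : StdTableau ℓ n) :
    Fin n → ZMod e :=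
  fun k => ((content κ T (k.1 + 1) : ℤ) : ZMod e)

/-- The residue of a node. -/
def resNode (e : ℕ) (κ : ℕ → ℤ) (A : Node) : ZMod e :=
  ((κ A.1 + (A.2.2 : ℤ) - (A.2.1 : ℤ) : ℤ) : ZMod e)

/-- A set of nodes is the diagram of a multipartition (with at most `ℓ` components)
iff it is finite and downward closed in rows and columns. -/
def IsDiagramSet (ℓ : ℕ) (S : Set Node) : Prop :=
  S.Finite ∧ (∀ A ∈ S, A.1 < ℓ) ∧
    (∀ l r c, (l, r, c + 1) ∈ S → (l, r, c) ∈ S) ∧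
    (∀ l r c, (l, r + 1, c) ∈ S → (l, r, c) ∈ S)

/-- `A` is an addable node of the diagram `S`. -/
def Addable (ℓ : ℕ) (S : Set Node) (A : Node) : Prop :=
  A ∉ S ∧ IsDiagramSet ℓ (S ∪ {A})

/-- `A` is a removable node of the diagram `S`. -/
def Removable (ℓ : ℕ) (S : Set Node) (A : Node) : Prop :=
  A ∈ S ∧ IsDiagramSet ℓ (S \ {A})

/-- `d_A(S)`: the number of addable nodes of `S` of the same residue as `A` strictly
below `A`, minus the number of removable ones. -/
noncomputable def dNode (ℓ e : ℕ) (κ : ℕ → ℤ) (S : Set Node) (A : Node) : ℤ :=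
  (Set.ncard {B | Addable ℓ S B ∧ resNode e κ B = resNode e κ A ∧ nodeBelow A B} : ℤ) -
    (Set.ncard {B | Removable ℓ S B ∧ resNode e κ B = resNode e κ A ∧ nodeBelow A B} : ℤ)

/-- The Brundan–Kleshchev–Wang degree `deg_e(T)` of a standard tableau, written as the
telescoping sum of the recursion `deg_e(T) = deg_e(T↓(n-1)) + d_A(Shape(T))`. -/
noncomputable def degE {ℓ n : ℕ} (e : ℕ) (κ : ℕ → ℤ) (T : StdTableau ℓ n) : ℤ :=
  ∑ m ∈ Finset.Icc 1 n,
    dNode ℓ e κ {A | A ∈ T.shape.diagram ∧ T.entry A ≤ m} (T.node m)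

/-- The restriction of the diagram of `T` to entries `≤ m` (the diagram of `Shape(T↓m)`). -/
def restDiag {ℓ n : ℕ} (T : StdTableau ℓ n) (m : ℕ) : Set Node :=
  {A | A ∈ T.shape.diagram ∧ T.entry A ≤ m}

/-- Dominance order on standard tableaux: `domTab S T` iff `S ⊵ T`. -/
def domTab {ℓ n : ℕ} (S T : StdTableau ℓ n) : Prop :=
  ∀ m l i : ℕ,
    Set.ncard {A | A ∈ restDiag T m ∧ (A.1 < l ∨ (A.1 = l ∧ A.2.1 ≤ i))} ≤
      Set.ncard {A | A ∈ restDiag S m ∧ (A.1 < l ∨ (A.1 = l ∧ A.2.1 ≤ i))}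

/-- Interchange the entries `r` and `r + 1` in an entry function. -/
def swapEntry (f : Node → ℕ) (r : ℕ) : Node → ℕ :=
  fun A => if f A = r then r + 1 else if f A = r + 1 then r else f A

/-- `ρ_r(T) = c_r(T) - c_{r+1}(T)`, the axial distance. -/
noncomputable def rhoTab {ℓ n : ℕ} (κ : ℕ → ℤ) (T : StdTableau ℓ n) (r : ℕ) : ℤ :=
  content κ T r - content κ T (r + 1)

/-- The entry function of the row-reading initial tableau `t^λ`. -/
noncomputable def tlamEntry {ℓ n : ℕ} (μ : Multipartition ℓ n) (A : Node) : ℕ :=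
  if A ∈ μ.diagram then
    (∑ l ∈ Finset.range A.1, ∑ r ∈ Finset.range n, μ.part l r) +
      (∑ r ∈ Finset.range A.2.1, μ.part A.1 r) + A.2.2 + 1
  else 0

/-- The finite set of possible contents of standard tableaux of size `n`. -/
noncomputable def contFinset (ℓ n : ℕ) (κ : ℕ → ℤ) : Finset ℤ :=
  ((Finset.range ℓ ×ˢ Finset.range n ×ˢ Finset.range n).image
      (fun x => κ x.1 + (x.2.2 : ℤ) - (x.2.1 : ℤ))).filter
    (fun c => ∃ T : StdTableau ℓ n, ∃ k, 1 ≤ k ∧ k ≤ n ∧ content κ T k = c)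

/-- The standard tableau (if any) obtained from `T` by interchanging the entries
`r` and `r + 1`; i.e. `T·s_r` if it is standard, and `none` otherwise. -/
noncomputable def oSwapO {ℓ n : ℕ} (T : StdTableau ℓ n) (r : ℕ) :
    Option (StdTableau ℓ n) :=
  if h : ∃ V : StdTableau ℓ n, V.entry = swapEntry T.entry r then some (Classical.choose h)
  else none

/-- `oSwap` extended to `Option`. -/
noncomputable def oSwap {ℓ n : ℕ} (X : Option (StdTableau ℓ n)) (r : ℕ) :
    Option (StdTableau ℓ n) :=
  X.bind fun T => oSwapO T r

/-- Evaluate a seminormal coefficient system on an optional tableau (by `0` if none). -/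
noncomputable def aE {ℓ n : ℕ} {K : Type*} [Field K] (α : ℕ → StdTableau ℓ n → K) (r : ℕ)
    (X : Option (StdTableau ℓ n)) : K :=
  X.elim 0 (α r)

/-! ## Separation and idempotent subrings -/

/-- `(K, t)` separates `Std(P_n)` (field version):
`[n]!_t ∏_{1 ≤ l < m ≤ ℓ} ∏_{-n < d < n} [κ_l - κ_m + d]_t ≠ 0`. -/
def SeparatesF {K : Type*} [Field K] (t : Kˣ) (n ℓ : ℕ) (κ : ℕ → ℤ) : Prop :=
  ((∏ d ∈ Finset.Icc 1 n, qint (t : K) (d : ℤ)) *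
      ∏ l ∈ Finset.range ℓ, ∏ m ∈ Finset.Ioo l ℓ,
        ∏ d ∈ Finset.Ioo (-(n : ℤ)) (n : ℤ), qint (t : K) (κ l - κ m + d)) ≠ 0

/-- `(O, t)` separates `Std(P_n)` (subring version): the separation element is a unit. -/
def SeparatesU {O : Type*} [CommRing O] (t : Oˣ) (n ℓ : ℕ) (κ : ℕ → ℤ) : Prop :=
  IsUnit ((∏ d ∈ Finset.Icc 1 n, qintU t (d : ℤ)) *
      ∏ l ∈ Finset.range ℓ, ∏ m ∈ Finset.Ioo l ℓ,
        ∏ d ∈ Finset.Ioo (-(n : ℤ)) (n : ℤ), qintU t (κ l - κ m + d))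

/-- `(O, t)` is an `e`-idempotent subring of the field `K`. -/
def IsIdempotentSubring {K : Type*} [Field K] (O : Subring K) (t : Oˣ) (e n ℓ : ℕ)
    (κ : ℕ → ℤ) : Prop :=
  SeparatesU t n ℓ κ ∧
    (∀ k : ℤ, ¬(e : ℤ) ∣ k → IsUnit (qintU t k)) ∧
    (∀ k : ℤ, (e : ℤ) ∣ k → qintU t k ∈ Ideal.jacobson (⊥ : Ideal O))

/-! ## The cyclotomic Hecke algebra, by generators and relations -/

/-- Generators `L_1, …, L_n`, `T_1, …, T_{n-1}` (here `0`-based). -/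
inductive HeckeGen (n : ℕ) : Type
  | L : Fin n → HeckeGen n
  | T : Fin (n - 1) → HeckeGen n

/-- The position `r` of the pair `(r, r+1)` interchanged by the `r`-th transposition. -/
def pL {n : ℕ} (r : Fin (n - 1)) : Fin n := ⟨r.1, by have := r.2; omega⟩

/-- The position `r + 1` of the pair interchanged by the `r`-th transposition. -/
def pR {n : ℕ} (r : Fin (n - 1)) : Fin n := ⟨r.1 + 1, by have := r.2; omega⟩

/-- The position `r + 2`, used in braid relations. -/
def pM {n : ℕ} (r : Fin (n - 1)) (hr : r.1 + 1 < n - 1) : Fin n := ⟨r.1 + 2, by omega⟩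

/-- The free algebra generator `L_k`. -/
def hL (R : Type*) [CommRing R] {n : ℕ} (k : Fin n) : FreeAlgebra R (HeckeGen n) :=
  FreeAlgebra.ι R (HeckeGen.L k)

/-- The free algebra generator `T_r`. -/
def hT (R : Type*) [CommRing R] {n : ℕ} (r : Fin (n - 1)) : FreeAlgebra R (HeckeGen n) :=
  FreeAlgebra.ι R (HeckeGen.T r)

/-- The defining relations of the integral cyclotomic Hecke algebra `H_n(R, t, κ)`. -/
inductive HeckeRel (R : Type*) [CommRing R] (t : Rˣ) (n ℓ : ℕ) (κ : ℕ → ℤ) :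
    FreeAlgebra R (HeckeGen n) → FreeAlgebra R (HeckeGen n) → Prop
  | cyc (h : 0 < n) :
      HeckeRel R t n ℓ κ
        (((List.range ℓ).map fun l =>
          hL R (⟨0, h⟩ : Fin n) - algebraMap R _ (qintU t (κ l))).prod) 0
  | quad (r : Fin (n - 1)) :
      HeckeRel R t n ℓ κ ((hT R r + 1) * (hT R r - algebraMap R _ (t : R))) 0
  | LL (k m : Fin n) : HeckeRel R t n ℓ κ (hL R k * hL R m) (hL R m * hL R k)
  | TTfar (r s : Fin (n - 1)) (h : r.1 + 1 < s.1 ∨ s.1 + 1 < r.1) :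
      HeckeRel R t n ℓ κ (hT R r * hT R s) (hT R s * hT R r)
  | braid (r s : Fin (n - 1)) (h : s.1 = r.1 + 1) :
      HeckeRel R t n ℓ κ (hT R r * hT R s * hT R r) (hT R s * hT R r * hT R s)
  | TL (r : Fin (n - 1)) (k : Fin n) (h : k.1 ≠ r.1 ∧ k.1 ≠ r.1 + 1) :
      HeckeRel R t n ℓ κ (hT R r * hL R k) (hL R k * hT R r)
  | LT (r : Fin (n - 1)) :
      HeckeRel R t n ℓ κ (hL R (pR r) * (hT R r - algebraMap R _ (t : R) + 1))
        (hT R r * hL R (pL r) + 1)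

/-- The integral cyclotomic Hecke algebra of type `A`, `H_n(R, t, κ)`. -/
noncomputable abbrev CycHecke (R : Type*) [CommRing R] (t : Rˣ) (n ℓ : ℕ) (κ : ℕ → ℤ) :
    Type _ :=
  RingQuot (HeckeRel R t n ℓ κ)

/-- The generator `L_k` of the cyclotomic Hecke algebra. -/
noncomputable def Lgen (R : Type*) [CommRing R] (t : Rˣ) (n ℓ : ℕ) (κ : ℕ → ℤ)
    (k : Fin n) : CycHecke R t n ℓ κ :=
  RingQuot.mkAlgHom R (HeckeRel R t n ℓ κ) (hL R k)

/-- The generator `T_r` of the cyclotomic Hecke algebra. -/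
noncomputable def Tgen (R : Type*) [CommRing R] (t : Rˣ) (n ℓ : ℕ) (κ : ℕ → ℤ)
    (r : Fin (n - 1)) : CycHecke R t n ℓ κ :=
  RingQuot.mkAlgHom R (HeckeRel R t n ℓ κ) (hT R r)

end Paper
/-! ## Quiver Hecke (KLR) algebras, by generators and relations -/

namespace Paper

/-- Generators `e(i)` (`i ∈ I^n`), `ψ_1, …, ψ_{n-1}`, `y_1, …, y_n` (here `0`-based). -/
inductive KLRGen (n e : ℕ) : Type
  | idem : (Fin n → ZMod e) → KLRGen n e
  | psi : Fin (n - 1) → KLRGen n e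
  | y : Fin n → KLRGen n e

/-- The free algebra generator `e(i)`. -/
def kE (R : Type*) [CommRing R] {n e : ℕ} (i : Fin n → ZMod e) :
    FreeAlgebra R (KLRGen n e) :=
  FreeAlgebra.ι R (KLRGen.idem i)

/-- The free algebra generator `ψ_r`. -/
def kPsi (R : Type*) [CommRing R] {n e : ℕ} (r : Fin (n - 1)) :
    FreeAlgebra R (KLRGen n e) :=
  FreeAlgebra.ι R (KLRGen.psi r)

/-- The free algebra generator `y_k`. -/
def kY (R : Type*) [CommRing R] {n e : ℕ} (k : Fin n) : FreeAlgebra R (KLRGen n e) :=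
  FreeAlgebra.ι R (KLRGen.y k)

/-- `s_r · i`: interchange the entries of `i` at positions `r` and `r + 1`. -/
def swapSeq {n e : ℕ} (i : Fin n → ZMod e) (r : Fin (n - 1)) : Fin n → ZMod e :=
  fun k => if k = pL r then i (pR r) else if k = pR r then i (pL r) else i k

/-- The defining relations of the cyclotomic quiver Hecke algebra `R_n^Λ(R)` where
`Λ = Σ_l Λ_{κ_l mod e}`. -/
inductive KLRRel (R : Type*) [CommRing R] (n e ℓ : ℕ) [NeZero e] (κ : ℕ → ℤ) :
    FreeAlgebra R (KLRGen n e) → FreeAlgebra R (KLRGen n e) → Prop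
  | cyc (h : 0 < n) (i : Fin n → ZMod e) :
      KLRRel R n e ℓ κ
        ((kY R (⟨0, h⟩ : Fin n)) ^
            (((Finset.range ℓ).filter fun l => ((κ l : ZMod e) = i ⟨0, h⟩)).card) *
          kE R i) 0
  | orth (i j : Fin n → ZMod e) (h : i ≠ j) : KLRRel R n e ℓ κ (kE R i * kE R j) 0
  | idem (i : Fin n → ZMod e) : KLRRel R n e ℓ κ (kE R i * kE R i) (kE R i)
  | complete : KLRRel R n e ℓ κ (∑ i : Fin n → ZMod e, kE R i) 1
  | yE (k : Fin n) (i : Fin n → ZMod e) :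
      KLRRel R n e ℓ κ (kY R k * kE R i) (kE R i * kY R k)
  | psiE (r : Fin (n - 1)) (i : Fin n → ZMod e) :
      KLRRel R n e ℓ κ (kPsi R r * kE R i) (kE R (swapSeq i r) * kPsi R r)
  | yy (k m : Fin n) : KLRRel R n e ℓ κ (kY R k * kY R m) (kY R m * kY R k)
  | psiyEq (r : Fin (n - 1)) (i : Fin n → ZMod e) (h : i (pL r) = i (pR r)) :
      KLRRel R n e ℓ κ (kPsi R r * kY R (pR r) * kE R i)
        ((kY R (pL r) * kPsi R r + 1) * kE R i)
  | psiyNe (r : Fin (n - 1)) (i : Fin n → ZMod e) (h : i (pL r) ≠ i (pR r)) :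
      KLRRel R n e ℓ κ (kPsi R r * kY R (pR r) * kE R i)
        (kY R (pL r) * kPsi R r * kE R i)
  | ypsiEq (r : Fin (n - 1)) (i : Fin n → ZMod e) (h : i (pL r) = i (pR r)) :
      KLRRel R n e ℓ κ (kY R (pR r) * kPsi R r * kE R i)
        ((kPsi R r * kY R (pL r) + 1) * kE R i)
  | ypsiNe (r : Fin (n - 1)) (i : Fin n → ZMod e) (h : i (pL r) ≠ i (pR r)) :
      KLRRel R n e ℓ κ (kY R (pR r) * kPsi R r * kE R i)
        (kPsi R r * kY R (pL r) * kE R i)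
  | psiyFar (r : Fin (n - 1)) (k : Fin n) (h : k.1 ≠ r.1 ∧ k.1 ≠ r.1 + 1) :
      KLRRel R n e ℓ κ (kPsi R r * kY R k) (kY R k * kPsi R r)
  | psipsiFar (r s : Fin (n - 1)) (h : r.1 + 1 < s.1 ∨ s.1 + 1 < r.1) :
      KLRRel R n e ℓ κ (kPsi R r * kPsi R s) (kPsi R s * kPsi R r)
  | quadEq (r : Fin (n - 1)) (i : Fin n → ZMod e) (h : i (pL r) = i (pR r)) :
      KLRRel R n e ℓ κ (kPsi R r ^ 2 * kE R i) 0
  | quadR (r : Fin (n - 1)) (i : Fin n → ZMod e)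
      (h1 : i (pR r) = i (pL r) + 1) (h2 : i (pL r) ≠ i (pR r) + 1) :
      KLRRel R n e ℓ κ (kPsi R r ^ 2 * kE R i) ((kY R (pL r) - kY R (pR r)) * kE R i)
  | quadL (r : Fin (n - 1)) (i : Fin n → ZMod e)
      (h1 : i (pL r) = i (pR r) + 1) (h2 : i (pR r) ≠ i (pL r) + 1) :
      KLRRel R n e ℓ κ (kPsi R r ^ 2 * kE R i) ((kY R (pR r) - kY R (pL r)) * kE R i)
  | quadBoth (r : Fin (n - 1)) (i : Fin n → ZMod e)
      (h1 : i (pR r) = i (pL r) + 1) (h2 : i (pL r) = i (pR r) + 1) :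
      KLRRel R n e ℓ κ (kPsi R r ^ 2 * kE R i)
        ((kY R (pR r) - kY R (pL r)) * (kY R (pL r) - kY R (pR r)) * kE R i)
  | quadNone (r : Fin (n - 1)) (i : Fin n → ZMod e) (h1 : i (pL r) ≠ i (pR r))
      (h2 : i (pR r) ≠ i (pL r) + 1) (h3 : i (pL r) ≠ i (pR r) + 1) :
      KLRRel R n e ℓ κ (kPsi R r ^ 2 * kE R i) (kE R i)
  | braidR (r : Fin (n - 1)) (hr : r.1 + 1 < n - 1) (i : Fin n → ZMod e)
      (h0 : i (pM r hr) = i (pL r)) (h1 : i (pR r) = i (pL r) + 1)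
      (h2 : i (pL r) ≠ i (pR r) + 1) :
      KLRRel R n e ℓ κ (kPsi R r * kPsi R ⟨r.1 + 1, hr⟩ * kPsi R r * kE R i)
        ((kPsi R ⟨r.1 + 1, hr⟩ * kPsi R r * kPsi R ⟨r.1 + 1, hr⟩ - 1) * kE R i)
  | braidL (r : Fin (n - 1)) (hr : r.1 + 1 < n - 1) (i : Fin n → ZMod e)
      (h0 : i (pM r hr) = i (pL r)) (h1 : i (pL r) = i (pR r) + 1)
      (h2 : i (pR r) ≠ i (pL r) + 1) :
      KLRRel R n e ℓ κ (kPsi R r * kPsi R ⟨r.1 + 1, hr⟩ * kPsi R r * kE R i)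
        ((kPsi R ⟨r.1 + 1, hr⟩ * kPsi R r * kPsi R ⟨r.1 + 1, hr⟩ + 1) * kE R i)
  | braidBoth (r : Fin (n - 1)) (hr : r.1 + 1 < n - 1) (i : Fin n → ZMod e)
      (h0 : i (pM r hr) = i (pL r)) (h1 : i (pR r) = i (pL r) + 1)
      (h2 : i (pL r) = i (pR r) + 1) :
      KLRRel R n e ℓ κ (kPsi R r * kPsi R ⟨r.1 + 1, hr⟩ * kPsi R r * kE R i)
        ((kPsi R ⟨r.1 + 1, hr⟩ * kPsi R r * kPsi R ⟨r.1 + 1, hr⟩ +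
            kY R (pL r) - 2 * kY R (pR r) + kY R (pM r hr)) * kE R i)
  | braidNone (r : Fin (n - 1)) (hr : r.1 + 1 < n - 1) (i : Fin n → ZMod e)
      (h : ¬(i (pM r hr) = i (pL r) ∧
        (i (pR r) = i (pL r) + 1 ∨ i (pL r) = i (pR r) + 1))) :
      KLRRel R n e ℓ κ (kPsi R r * kPsi R ⟨r.1 + 1, hr⟩ * kPsi R r * kE R i)
        (kPsi R ⟨r.1 + 1, hr⟩ * kPsi R r * kPsi R ⟨r.1 + 1, hr⟩ * kE R i)

/-- The cyclotomic quiver Hecke algebra `R_n^Λ(R)`, `Λ = Σ_l Λ_{κ_l mod e}`. -/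
noncomputable abbrev KLR (R : Type*) [CommRing R] (n e ℓ : ℕ) [NeZero e] (κ : ℕ → ℤ) :
    Type _ :=
  RingQuot (KLRRel R n e ℓ κ)

/-- The generator `e(i)` of the cyclotomic quiver Hecke algebra. -/
noncomputable def KeGen (R : Type*) [CommRing R] (n e ℓ : ℕ) [NeZero e] (κ : ℕ → ℤ)
    (i : Fin n → ZMod e) : KLR R n e ℓ κ :=
  RingQuot.mkAlgHom R (KLRRel R n e ℓ κ) (kE R i)

/-- The generator `ψ_r` of the cyclotomic quiver Hecke algebra. -/
noncomputable def KpsiGen (R : Type*) [CommRing R] (n e ℓ : ℕ) [NeZero e] (κ : ℕ → ℤ)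
    (r : Fin (n - 1)) : KLR R n e ℓ κ :=
  RingQuot.mkAlgHom R (KLRRel R n e ℓ κ) (kPsi R r)

/-- The generator `y_k` of the cyclotomic quiver Hecke algebra. -/
noncomputable def KyGen (R : Type*) [CommRing R] (n e ℓ : ℕ) [NeZero e] (κ : ℕ → ℤ)
    (k : Fin n) : KLR R n e ℓ κ :=
  RingQuot.mkAlgHom R (KLRRel R n e ℓ κ) (kY R k)

end Paper
/-! ## The deformed cyclotomic quiver Hecke algebra -/

namespace Paper

/-- `y_k^⟨d⟩ = t^d y_k + [d]_t` in the free algebra. -/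
def ydot (R : Type*) [CommRing R] (t : Rˣ) {n e : ℕ} (d : ℤ) (k : Fin n) :
    FreeAlgebra R (KLRGen n e) :=
  algebraMap R _ ((t ^ d : Rˣ) : R) * kY R k + algebraMap R _ (qintU t d)

/-- `ρ_r(i) = î_r - î_{r+1}` for `i ∈ I^n`. -/
def rhoI {n e : ℕ} (i : Fin n → ZMod e) (r : Fin (n - 1)) : ℤ :=
  ((i (pL r)).val : ℤ) - ((i (pR r)).val : ℤ)

/-- The defining relations of the deformed cyclotomic quiver Hecke algebra `R_n(O)`. -/
inductive DefKLRRel (R : Type*) [CommRing R] (t : Rˣ) (n e ℓ : ℕ) [NeZero e] (κ : ℕ → ℤ) :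
    FreeAlgebra R (KLRGen n e) → FreeAlgebra R (KLRGen n e) → Prop
  | cyc (h : 0 < n) (i : Fin n → ZMod e) :
      DefKLRRel R t n e ℓ κ
        ((((List.range ℓ).map fun l =>
            if ((κ l : ZMod e) = i ⟨0, h⟩) then
              kY R (⟨0, h⟩ : Fin n) -
                algebraMap R _ (qintU t (κ l - ((i ⟨0, h⟩).val : ℤ)))
            else 1).prod) * kE R i) 0
  | orth (i j : Fin n → ZMod e) (h : i ≠ j) : DefKLRRel R t n e ℓ κ (kE R i * kE R j) 0
  | idem (i : Fin n → ZMod e) : DefKLRRel R t n e ℓ κ (kE R i * kE R i) (kE R i)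
  | complete : DefKLRRel R t n e ℓ κ (∑ i : Fin n → ZMod e, kE R i) 1
  | yE (k : Fin n) (i : Fin n → ZMod e) :
      DefKLRRel R t n e ℓ κ (kY R k * kE R i) (kE R i * kY R k)
  | psiE (r : Fin (n - 1)) (i : Fin n → ZMod e) :
      DefKLRRel R t n e ℓ κ (kPsi R r * kE R i) (kE R (swapSeq i r) * kPsi R r)
  | yy (k m : Fin n) : DefKLRRel R t n e ℓ κ (kY R k * kY R m) (kY R m * kY R k)
  | psiyEq (r : Fin (n - 1)) (i : Fin n → ZMod e) (h : i (pL r) = i (pR r)) :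
      DefKLRRel R t n e ℓ κ (kPsi R r * kY R (pR r) * kE R i)
        ((kY R (pL r) * kPsi R r + 1) * kE R i)
  | psiyNe (r : Fin (n - 1)) (i : Fin n → ZMod e) (h : i (pL r) ≠ i (pR r)) :
      DefKLRRel R t n e ℓ κ (kPsi R r * kY R (pR r) * kE R i)
        (kY R (pL r) * kPsi R r * kE R i)
  | ypsiEq (r : Fin (n - 1)) (i : Fin n → ZMod e) (h : i (pL r) = i (pR r)) :
      DefKLRRel R t n e ℓ κ (kY R (pR r) * kPsi R r * kE R i)
        ((kPsi R r * kY R (pL r) + 1) * kE R i)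
  | ypsiNe (r : Fin (n - 1)) (i : Fin n → ZMod e) (h : i (pL r) ≠ i (pR r)) :
      DefKLRRel R t n e ℓ κ (kY R (pR r) * kPsi R r * kE R i)
        (kPsi R r * kY R (pL r) * kE R i)
  | psiyFar (r : Fin (n - 1)) (k : Fin n) (h : k.1 ≠ r.1 ∧ k.1 ≠ r.1 + 1) :
      DefKLRRel R t n e ℓ κ (kPsi R r * kY R k) (kY R k * kPsi R r)
  | psipsiFar (r s : Fin (n - 1)) (h : r.1 + 1 < s.1 ∨ s.1 + 1 < r.1) :
      DefKLRRel R t n e ℓ κ (kPsi R r * kPsi R s) (kPsi R s * kPsi R r)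
  | quadEq (r : Fin (n - 1)) (i : Fin n → ZMod e) (h : i (pL r) = i (pR r)) :
      DefKLRRel R t n e ℓ κ (kPsi R r ^ 2 * kE R i) 0
  | quadR (r : Fin (n - 1)) (i : Fin n → ZMod e)
      (h1 : i (pR r) = i (pL r) + 1) (h2 : i (pL r) ≠ i (pR r) + 1) :
      DefKLRRel R t n e ℓ κ (kPsi R r ^ 2 * kE R i)
        ((ydot R t (1 + rhoI i r) (pL r) - kY R (pR r)) * kE R i)
  | quadL (r : Fin (n - 1)) (i : Fin n → ZMod e)
      (h1 : i (pL r) = i (pR r) + 1) (h2 : i (pR r) ≠ i (pL r) + 1) :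
      DefKLRRel R t n e ℓ κ (kPsi R r ^ 2 * kE R i)
        ((ydot R t (1 - rhoI i r) (pR r) - kY R (pL r)) * kE R i)
  | quadBoth (r : Fin (n - 1)) (i : Fin n → ZMod e)
      (h1 : i (pR r) = i (pL r) + 1) (h2 : i (pL r) = i (pR r) + 1) :
      DefKLRRel R t n e ℓ κ (kPsi R r ^ 2 * kE R i)
        ((ydot R t (1 + rhoI i r) (pL r) - kY R (pR r)) *
          (ydot R t (1 - rhoI i r) (pR r) - kY R (pL r)) * kE R i)
  | quadNone (r : Fin (n - 1)) (i : Fin n → ZMod e) (h1 : i (pL r) ≠ i (pR r))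
      (h2 : i (pR r) ≠ i (pL r) + 1) (h3 : i (pL r) ≠ i (pR r) + 1) :
      DefKLRRel R t n e ℓ κ (kPsi R r ^ 2 * kE R i) (kE R i)
  | braidBoth (r : Fin (n - 1)) (hr : r.1 + 1 < n - 1) (i : Fin n → ZMod e)
      (h0 : i (pM r hr) = i (pL r)) (h1 : i (pR r) = i (pL r) + 1)
      (h2 : i (pL r) = i (pR r) + 1) :
      DefKLRRel R t n e ℓ κ
        ((kPsi R r * kPsi R ⟨r.1 + 1, hr⟩ * kPsi R r -
            kPsi R ⟨r.1 + 1, hr⟩ * kPsi R r * kPsi R ⟨r.1 + 1, hr⟩) * kE R i)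
        ((ydot R t (1 + rhoI i r) (pL r) + ydot R t (1 + rhoI i r) (pM r hr) -
            ydot R t (1 + rhoI i r) (pR r) - ydot R t (1 - rhoI i r) (pR r)) * kE R i)
  | braidR (r : Fin (n - 1)) (hr : r.1 + 1 < n - 1) (i : Fin n → ZMod e)
      (h0 : i (pM r hr) = i (pL r)) (h1 : i (pR r) = i (pL r) + 1)
      (h2 : i (pL r) ≠ i (pR r) + 1) :
      DefKLRRel R t n e ℓ κ
        ((kPsi R r * kPsi R ⟨r.1 + 1, hr⟩ * kPsi R r -
            kPsi R ⟨r.1 + 1, hr⟩ * kPsi R r * kPsi R ⟨r.1 + 1, hr⟩) * kE R i)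
        (algebraMap R _ (-(((t ^ (1 + rhoI i r) : Rˣ) : R))) * kE R i)
  | braidL (r : Fin (n - 1)) (hr : r.1 + 1 < n - 1) (i : Fin n → ZMod e)
      (h0 : i (pM r hr) = i (pL r)) (h1 : i (pL r) = i (pR r) + 1)
      (h2 : i (pR r) ≠ i (pL r) + 1) :
      DefKLRRel R t n e ℓ κ
        ((kPsi R r * kPsi R ⟨r.1 + 1, hr⟩ * kPsi R r -
            kPsi R ⟨r.1 + 1, hr⟩ * kPsi R r * kPsi R ⟨r.1 + 1, hr⟩) * kE R i)
        (kE R i)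
  | braidNone (r : Fin (n - 1)) (hr : r.1 + 1 < n - 1) (i : Fin n → ZMod e)
      (h : ¬(i (pM r hr) = i (pL r) ∧
        (i (pR r) = i (pL r) + 1 ∨ i (pL r) = i (pR r) + 1))) :
      DefKLRRel R t n e ℓ κ
        ((kPsi R r * kPsi R ⟨r.1 + 1, hr⟩ * kPsi R r -
            kPsi R ⟨r.1 + 1, hr⟩ * kPsi R r * kPsi R ⟨r.1 + 1, hr⟩) * kE R i) 0

/-- The deformed cyclotomic quiver Hecke algebra `R_n(R)`. -/
noncomputable abbrev DefKLR (R : Type*) [CommRing R] (t : Rˣ) (n e ℓ : ℕ) [NeZero e]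
    (κ : ℕ → ℤ) : Type _ :=
  RingQuot (DefKLRRel R t n e ℓ κ)

/-- The generator `f_i` of the deformed cyclotomic quiver Hecke algebra. -/
noncomputable def DfGen (R : Type*) [CommRing R] (t : Rˣ) (n e ℓ : ℕ) [NeZero e]
    (κ : ℕ → ℤ) (i : Fin n → ZMod e) : DefKLR R t n e ℓ κ :=
  RingQuot.mkAlgHom R (DefKLRRel R t n e ℓ κ) (kE R i)

/-- The generator `ψ_r` of the deformed cyclotomic quiver Hecke algebra. -/
noncomputable def DpsiGen (R : Type*) [CommRing R] (t : Rˣ) (n e ℓ : ℕ) [NeZero e]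
    (κ : ℕ → ℤ) (r : Fin (n - 1)) : DefKLR R t n e ℓ κ :=
  RingQuot.mkAlgHom R (DefKLRRel R t n e ℓ κ) (kPsi R r)

/-- The generator `y_k` of the deformed cyclotomic quiver Hecke algebra. -/
noncomputable def DyGen (R : Type*) [CommRing R] (t : Rˣ) (n e ℓ : ℕ) [NeZero e]
    (κ : ℕ → ℤ) (k : Fin n) : DefKLR R t n e ℓ κ :=
  RingQuot.mkAlgHom R (DefKLRRel R t n e ℓ κ) (kY R k)

/-! ## Seminormal idempotents -/

/-- The seminormal idempotent `F_T` of the semisimple cyclotomic Hecke algebra: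
`F_T = ∏_{k=1}^n ∏_{c ∈ Cont(n), [c_k(T)] ≠ [c]} (L_k - [c]) / ([c_k(T)] - [c])`. -/
noncomputable def Fidem (K : Type*) [Field K] (tK : Kˣ) (n ℓ : ℕ) (κ : ℕ → ℤ)
    (T : StdTableau ℓ n) : CycHecke K tK n ℓ κ :=
  ((List.finRange n).map (fun k =>
    (((contFinset ℓ n κ).sort (· ≤ ·)).map (fun c =>
      if qint (tK : K) (content κ T (k.1 + 1)) ≠ qint (tK : K) c then
        (Lgen K tK n ℓ κ k - algebraMap K _ (qint (tK : K) c)) *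
          algebraMap K _ ((qint (tK : K) (content κ T (k.1 + 1)) - qint (tK : K) c)⁻¹)
      else 1)).prod)).prod

/-- The residue idempotent `f_i = Σ_{T ∈ Std(i)} F_T`. -/
noncomputable def fres (K : Type*) [Field K] (tK : Kˣ) (n ℓ e : ℕ) (κ : ℕ → ℤ)
    (i : Fin n → ZMod e) : CycHecke K tK n ℓ κ :=
  ∑ᶠ T : {T : StdTableau ℓ n // resSeq e κ T = i}, Fidem K tK n ℓ κ T.1

/-- The simultaneous two-sided eigenspace `H_{S,T}` of the Jucys–Murphy elements. -/
noncomputable def eigSub (K : Type*) [Field K] (tK : Kˣ) (n ℓ : ℕ) (κ : ℕ → ℤ)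
    (S T : StdTableau ℓ n) : Submodule K (CycHecke K tK n ℓ κ) where
  carrier := {h | ∀ k : Fin n,
      Lgen K tK n ℓ κ k * h = qint (tK : K) (content κ S (k.1 + 1)) • h ∧
      h * Lgen K tK n ℓ κ k = qint (tK : K) (content κ T (k.1 + 1)) • h}
  add_mem' := by
    intro a b ha hb
    intro k
    obtain ⟨h1, h2⟩ := ha k
    obtain ⟨h3, h4⟩ := hb k
    exact ⟨by rw [mul_add, h1, h3, smul_add], by rw [add_mul, h2, h4, smul_add]⟩
  zero_mem' := by intro k; simp
  smul_mem' := by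
    intro c a ha
    intro k
    obtain ⟨h1, h2⟩ := ha k
    constructor
    · rw [mul_smul_comm, h1, smul_comm]
    · rw [smul_mul_assoc, h2, smul_comm]

end Paper

namespace Paper

/-- The fraction field `ℚ(t)` of `ℤ[t]`. -/
noncomputable abbrev FF : Type := FractionRing (Polynomial ℤ)

/-- The image of the indeterminate `t` in `ℚ(t)`. -/
noncomputable def xF : FF := algebraMap (Polynomial ℤ) FF Polynomial.X

/-!
Fix a node `A = (l, r, c)` of `λ`. In the shape of `t^λ` restricted to the entries up to that of
`A`, no removable node lies strictly below `A`. Apart from the node to the right of `A`, whose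
residue differs from that of `A` for every `e ≥ 2`, the addable nodes strictly below `A` are the
start of the next row and the starts of the later components. The content differences
`c_A - c_B` for these nodes `B` are `c + 1` and `κ_l - r + c - κ_m`, exactly the arguments of the
quantum integers in `γ_{t^λ}`. Hence `γ_{t^λ} = ∏ [c_A - c_B]_t` over such pairs, while
`deg_e(t^λ)` is the number of pairs with `e ∣ c_A - c_B`, and it remains to factor
`[d]_t = ∏ Φ_e(t)`, the product over the divisors `e ≥ 2` of `d > 0`.
-/

section QuantumIntegers

variable {K : Type*} [Field K]

open Polynomial in
lemma qint_natCast_eq_prod_cyclotomic (x : K) {d : ℕ} (hd : 0 < d) :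
    qint x d = ∏ e ∈ d.divisors.erase 1, (cyclotomic e K).eval x := by
  rw [← eval_prod, prod_cyclotomic_eq_geom_sum hd, eval_geom_sum]
  simp [qint]

open Polynomial in
lemma prod_qint_eq_finprod_cyclotomic {ι : Type*} (x : K) (s : Finset ι) (d : ι → ℤ)
    (hd : ∀ i ∈ s, 0 < d i) :
    ∏ i ∈ s, qint x (d i) =
      ∏ᶠ (e : ℕ) (_ : 2 ≤ e), (cyclotomic e K).eval x ^ Finset.card {i ∈ s | (e : ℤ) ∣ d i} := by
  set D : ι → Finset ℕ := fun i => (d i).natAbs.divisors.erase 1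
  have mem_D : ∀ i ∈ s, ∀ e, e ∈ D i ↔ 2 ≤ e ∧ (e : ℤ) ∣ d i := by
    intro i hi e
    have hdi : (d i).natAbs ≠ 0 := Int.natAbs_ne_zero.2 (hd i hi).ne'
    have he : e ∣ (d i).natAbs → e ≠ 0 := fun h h0 => hdi (by simpa [h0] using h)
    simp only [D, Finset.mem_erase, Nat.mem_divisors, Int.natCast_dvd]
    grind
  calc ∏ i ∈ s, qint x (d i)
      = ∏ i ∈ s, ∏ e ∈ D i, (cyclotomic e K).eval x := by
        refine Finset.prod_congr rfl fun i hi => ?_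
        rw [← qint_natCast_eq_prod_cyclotomic x (Int.natAbs_pos.2 (hd i hi).ne'),
          Int.natAbs_of_nonneg (hd i hi).le]
    _ = ∏ e ∈ s.biUnion D, ∏ i ∈ s with (e : ℤ) ∣ d i, (cyclotomic e K).eval x := by
        refine Finset.prod_comm' fun i e => ?_
        simp only [Finset.mem_filter, Finset.mem_biUnion]
        grind
    _ = ∏ e ∈ s.biUnion D, (cyclotomic e K).eval x ^ Finset.card {i ∈ s | (e : ℤ) ∣ d i} := by
        simp only [Finset.prod_const]
    _ = _ := by
        refine (finprod_cond_eq_prod_of_cond_iff _ fun {e} he => ?_).symm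
        have hcard : Finset.card {i ∈ s | (e : ℤ) ∣ d i} ≠ 0 := fun h => he (by rw [h, pow_zero])
        obtain ⟨i, hi⟩ := Finset.card_ne_zero.1 hcard
        simp only [Finset.mem_filter] at hi
        simp only [Finset.mem_biUnion]
        grind

lemma eval_cyclotomic_xF (e : ℕ) :
    (Polynomial.cyclotomic e FF).eval xF =
      algebraMap (Polynomial ℤ) FF (Polynomial.cyclotomic e ℤ) := by
  rw [← Polynomial.map_cyclotomic e (algebraMap ℤ FF), Polynomial.eval_map_algebraMap, xF,
    Polynomial.aeval_algebraMap_apply, Polynomial.aeval_X_left_apply]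

end QuantumIntegers

section Nodes

/-- The integral content `κ_l + c - r` of the node `(l, r, c)`; its reduction modulo `e` is the
residue `resNode e κ`. -/
def nodeContent (κ : ℕ → ℤ) (A : Node) : ℤ :=
  κ A.1 + (A.2.2 : ℤ) - (A.2.1 : ℤ)

lemma resNode_eq_resNode_iff {e : ℕ} {κ : ℕ → ℤ} {A B : Node} :
    resNode e κ B = resNode e κ A ↔ (e : ℤ) ∣ nodeContent κ A - nodeContent κ B :=
  ZMod.intCast_eq_intCast_iff_dvd_sub _ _ _

lemma resNode_right_ne {e : ℕ} (he : e ≠ 1) (κ : ℕ → ℤ) (A : Node) :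
    resNode e κ (A.1, A.2.1, A.2.2 + 1) ≠ resNode e κ A := by
  have hdiff : nodeContent κ A - nodeContent κ (A.1, A.2.1, A.2.2 + 1) = -1 := by
    simp only [nodeContent]
    push_cast
    ring
  rw [Ne, resNode_eq_resNode_iff, hdiff, Int.dvd_neg]
  exact_mod_cast mt Nat.dvd_one.1 he

lemma nodeBelow_trichotomy (A B : Node) : nodeBelow A B ∨ A = B ∨ nodeBelow B A := by
  obtain ⟨l, r, c⟩ := A
  obtain ⟨l', r', c'⟩ := B
  simp only [nodeBelow, Prod.mk.injEq]
  omega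

lemma addable_iff_of_isDiagramSet {ℓ : ℕ} {S : Set Node} (hS : IsDiagramSet ℓ S) (l r c : ℕ) :
    Addable ℓ S (l, r, c) ↔ (l, r, c) ∉ S ∧ l < ℓ ∧
      (∀ c', c = c' + 1 → (l, r, c') ∈ S) ∧ ∀ r', r = r' + 1 → (l, r', c) ∈ S := by
  obtain ⟨hfin, hcomp, hrow, hcol⟩ := hS
  refine and_congr_right fun _ => ⟨?_, ?_⟩
  · rintro ⟨-, hcomp', hrow', hcol'⟩
    refine ⟨hcomp' (l, r, c) (by simp), ?_, ?_⟩
    · rintro c' rfl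
      simpa using hrow' l r c' (by simp)
    · rintro r' rfl
      simpa using hcol' l r' c (by simp)
  · rintro ⟨hl, hleft, hup⟩
    refine ⟨hfin.union (Set.finite_singleton _), ?_, ?_, ?_⟩
    · rintro A (hA | rfl)
      exacts [hcomp A hA, hl]
    · rintro l' r' c' (h | h)
      · exact .inl (hrow _ _ _ h)
      · obtain ⟨rfl, rfl, rfl⟩ : l' = l ∧ r' = r ∧ c' + 1 = c := by simpa using h
        exact .inl (hleft _ rfl)
    · rintro l' r' c' (h | h)
      · exact .inl (hcol _ _ _ h)
      · obtain ⟨rfl, rfl, rfl⟩ : l' = l ∧ r' + 1 = r ∧ c' = c := by simpa using h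
        exact .inl (hup _ rfl)

/-- The row starts below `A`: the node starting the row after that of `A`, and the first node of
each later component. These are the addable nodes strictly below `A` of the shape filled by the
row-reading tableau up to `A`, except possibly for the node immediately to the right of `A`. -/
def rowStartsBelow (ℓ : ℕ) (A : Node) : Finset Node :=
  insert (A.1, A.2.1 + 1, 0) ((Finset.Ioo A.1 ℓ).image fun m => (m, 0, 0))

lemma mem_rowStartsBelow {ℓ : ℕ} {A : Node} {l r c : ℕ} :
    (l, r, c) ∈ rowStartsBelow ℓ A ↔
      c = 0 ∧ (l = A.1 ∧ r = A.2.1 + 1 ∨ A.1 < l ∧ l < ℓ ∧ r = 0) := by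
  simp only [rowStartsBelow, Finset.mem_insert, Finset.mem_image, Finset.mem_Ioo, Prod.mk.injEq]
  grind

lemma nodeBelow_of_mem_rowStartsBelow {ℓ : ℕ} {A B : Node} (hB : B ∈ rowStartsBelow ℓ A) :
    nodeBelow A B := by
  obtain ⟨l, r, c⟩ := B
  rw [mem_rowStartsBelow] at hB
  simp only [nodeBelow]
  omega

lemma prod_rowStartsBelow {M : Type*} [CommMonoid M] (ℓ : ℕ) (A : Node) (f : Node → M) :
    ∏ B ∈ rowStartsBelow ℓ A, f B =
      f (A.1, A.2.1 + 1, 0) * ∏ m ∈ Finset.Ioo A.1 ℓ, f (m, 0, 0) := by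
  rw [rowStartsBelow, Finset.prod_insert (by simp), Finset.prod_image (by simp)]

lemma nodeContent_sub_pos_of_mem_rowStartsBelow {ℓ : ℕ} {κ : ℕ → ℤ} {A B : Node}
    (hκ : ∀ m ∈ Finset.Ioo A.1 ℓ, 0 < nodeContent κ A - κ m) (hB : B ∈ rowStartsBelow ℓ A) :
    0 < nodeContent κ A - nodeContent κ B := by
  simp only [rowStartsBelow, Finset.mem_insert, Finset.mem_image] at hB
  obtain rfl | ⟨m, hm, rfl⟩ := hB
  · simp only [nodeContent]
    omega
  · simpa [nodeContent] using hκ m hm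

end Nodes

namespace Multipartition

variable {ℓ n : ℕ} (μ : Multipartition ℓ n)

lemma mem_diagram {l r c : ℕ} : (l, r, c) ∈ μ.diagram ↔ c < μ.part l r :=
  Iff.rfl

variable {μ} in
lemma component_lt {A : Node} (hA : A ∈ μ.diagram) : A.1 < ℓ := by
  by_contra! h
  exact absurd (μ.comp_bound _ h A.2.1) (Nat.ne_zero_of_lt hA)

variable {μ} in
lemma row_lt {A : Node} (hA : A ∈ μ.diagram) : A.2.1 < n := by
  by_contra! h
  exact absurd (μ.row_bound A.1 _ h) (Nat.ne_zero_of_lt hA)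

/-- The diagram of a multipartition as a finset. -/
def nodes : Finset Node :=
  ((Finset.range ℓ).sigma fun l => (Finset.range n).sigma fun r =>
    Finset.range (μ.part l r)).image fun x => (x.1, x.2.1, x.2.2)

variable {μ} in
lemma mem_nodes {A : Node} : A ∈ μ.nodes ↔ A ∈ μ.diagram := by
  obtain ⟨l, r, c⟩ := A
  simp only [nodes, Finset.mem_image, Finset.mem_sigma, Finset.mem_range, Prod.mk.injEq]
  constructor
  · rintro ⟨⟨l, r, c⟩, ⟨-, -, hc⟩, rfl, rfl, rfl⟩
    exact hc
  · intro h
    exact ⟨⟨l, r, c⟩, ⟨component_lt h, row_lt h, h⟩, rfl, rfl, rfl⟩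

lemma coe_nodes : (μ.nodes : Set Node) = μ.diagram :=
  Set.ext fun _ => mem_nodes

lemma prod_nodes {M : Type*} [CommMonoid M] (f : Node → M) :
    ∏ A ∈ μ.nodes, f A =
      ∏ l ∈ Finset.range ℓ, ∏ r ∈ Finset.range n, ∏ c ∈ Finset.range (μ.part l r),
        f (l, r, c) := by
  rw [nodes, Finset.prod_image (by rintro ⟨_, _, _⟩ - ⟨_, _, _⟩ - h; simpa using h)]
  simp only [Finset.prod_sigma]

variable {μ} in
lemma tlamEntry_lt_tlamEntry {A B : Node} (hA : A ∈ μ.diagram) (hB : B ∈ μ.diagram)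
    (hAB : nodeBelow A B) : tlamEntry μ A < tlamEntry μ B := by
  have hc : A.2.2 < μ.part A.1 A.2.1 := hA
  have row_le : ∀ r, A.2.1 < r →
      ∑ i ∈ Finset.range A.2.1, μ.part A.1 i + μ.part A.1 A.2.1 ≤
        ∑ i ∈ Finset.range r, μ.part A.1 i := fun r hr => by
    rw [← Finset.sum_range_succ]
    exact Finset.sum_le_sum_of_subset (Finset.range_mono hr)
  simp only [tlamEntry, hA, hB, if_true]
  rcases hAB with hl | ⟨hl, hr | ⟨hr, hc'⟩⟩
  · have component_le : ∑ l ∈ Finset.range A.1, ∑ i ∈ Finset.range n, μ.part l i +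
        ∑ i ∈ Finset.range n, μ.part A.1 i ≤
          ∑ l ∈ Finset.range B.1, ∑ i ∈ Finset.range n, μ.part l i := by
      rw [← Finset.sum_range_succ (fun l => ∑ i ∈ Finset.range n, μ.part l i)]
      exact Finset.sum_le_sum_of_subset (Finset.range_mono hl)
    have := row_le n (row_lt hA)
    omega
  · have := row_le _ hr
    rw [← hl]
    omega
  · rw [← hl, ← hr]
    omega

variable {μ} in
lemma tlamEntry_le_tlamEntry_iff {A B : Node} (hA : A ∈ μ.diagram) (hB : B ∈ μ.diagram) :
    tlamEntry μ B ≤ tlamEntry μ A ↔ ¬ nodeBelow A B := by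
  refine ⟨fun h hAB => (tlamEntry_lt_tlamEntry hA hB hAB).not_ge h, fun h => ?_⟩
  rcases nodeBelow_trichotomy A B with hAB | rfl | hBA
  exacts [absurd hAB h, le_rfl, (tlamEntry_lt_tlamEntry hB hA hBA).le]

/-- The nodes of `μ` that are not strictly below `A`, i.e. the shape of the restriction of the
row-reading tableau `t^μ` to the entries up to that of `A`. -/
def initialSegment (A : Node) : Set Node :=
  {B | B ∈ μ.diagram ∧ ¬ nodeBelow A B}

variable {μ} in
lemma setOf_tlamEntry_le {A : Node} (hA : A ∈ μ.diagram) :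
    {B | B ∈ μ.diagram ∧ tlamEntry μ B ≤ tlamEntry μ A} = μ.initialSegment A :=
  Set.ext fun _ => and_congr_right fun hB => tlamEntry_le_tlamEntry_iff hA hB

lemma isDiagramSet_initialSegment (A : Node) : IsDiagramSet ℓ (μ.initialSegment A) := by
  refine ⟨?_, fun B hB => component_lt hB.1, ?_, ?_⟩
  · exact (μ.coe_nodes ▸ μ.nodes.finite_toSet).subset fun B hB => hB.1
  · rintro l r c ⟨hB, hAB⟩
    simp only [initialSegment, Set.mem_ofPred_eq, mem_diagram, nodeBelow] at hB hAB ⊢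
    omega
  · rintro l r c ⟨hB, hAB⟩
    have : μ.part l (r + 1) ≤ μ.part l r := μ.antitone l (Nat.le_add_right r 1)
    simp only [initialSegment, Set.mem_ofPred_eq, mem_diagram, nodeBelow] at hB hAB ⊢
    omega

variable {μ} in
lemma addable_initialSegment_iff {A B : Node} (hA : A ∈ μ.diagram) (hAB : nodeBelow A B)
    (hB : B ≠ (A.1, A.2.1, A.2.2 + 1)) :
    Addable ℓ (μ.initialSegment A) B ↔ B ∈ rowStartsBelow ℓ A := by
  obtain ⟨l, r, c⟩ := B
  have hl := component_lt hA
  have hc : A.2.2 < μ.part A.1 A.2.1 := hA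
  rw [addable_iff_of_isDiagramSet (μ.isDiagramSet_initialSegment A), mem_rowStartsBelow]
  simp only [initialSegment, Set.mem_ofPred_eq, mem_diagram, nodeBelow, ne_eq, Prod.mk.injEq]
    at hAB hB ⊢
  constructor
  · rintro ⟨-, hl', hleft, hup⟩
    have := hleft (c - 1)
    have := hup (r - 1)
    omega
  · rintro ⟨rfl, ⟨rfl, rfl⟩ | ⟨hl', hl'', rfl⟩⟩
    · refine ⟨by omega, hl, by omega, ?_⟩
      rintro r' hr'
      obtain rfl : A.2.1 = r' := by omega
      omega
    · exact ⟨by omega, hl'', by omega, by omega⟩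

variable {μ} in
lemma dNode_initialSegment {e : ℕ} (he : e ≠ 1) (κ : ℕ → ℤ) {A : Node} (hA : A ∈ μ.diagram) :
    dNode ℓ e κ (μ.initialSegment A) A =
      Finset.card {B ∈ rowStartsBelow ℓ A | (e : ℤ) ∣ nodeContent κ A - nodeContent κ B} := by
  have removable_eq : {B | Removable ℓ (μ.initialSegment A) B ∧ resNode e κ B = resNode e κ A ∧
      nodeBelow A B} = ∅ :=
    Set.eq_empty_of_forall_notMem fun B ⟨hB, _, hAB⟩ => hB.1.2 hAB
  have ne_right : ∀ B, resNode e κ B = resNode e κ A → B ≠ (A.1, A.2.1, A.2.2 + 1) := by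
    rintro _ hres rfl
    exact resNode_right_ne he κ A hres
  have addable_eq : {B | Addable ℓ (μ.initialSegment A) B ∧ resNode e κ B = resNode e κ A ∧
      nodeBelow A B} =
        Finset.filter (fun B => (e : ℤ) ∣ nodeContent κ A - nodeContent κ B)
          (rowStartsBelow ℓ A) := by
    ext B
    rw [Finset.coe_filter, Set.mem_ofPred_eq, Set.mem_ofPred_eq, ← resNode_eq_resNode_iff]
    constructor
    · rintro ⟨hadd, hres, hAB⟩
      exact ⟨(addable_initialSegment_iff hA hAB (ne_right B hres)).1 hadd, hres⟩
    · rintro ⟨hB, hres⟩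
      have hAB := nodeBelow_of_mem_rowStartsBelow hB
      exact ⟨(addable_initialSegment_iff hA hAB (ne_right B hres)).2 hB, hres, hAB⟩
  rw [dNode, removable_eq, addable_eq, Set.ncard_coe_finset, Set.ncard_empty, Nat.cast_zero,
    sub_zero]

end Multipartition

namespace StdTableau

variable {ℓ n : ℕ} (T : StdTableau ℓ n)

lemma node_entry {A : Node} (hA : A ∈ T.shape.diagram) : T.node (T.entry A) = A :=
  T.bijOn.injOn.leftInvOn_invFunOn hA

lemma sum_Icc_node {M : Type*} [AddCommMonoid M] (f : ℕ → Node → M) :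
    ∑ k ∈ Finset.Icc 1 n, f k (T.node k) = ∑ A ∈ T.shape.nodes, f (T.entry A) A := by
  have hbij : Set.BijOn T.entry T.shape.nodes (Finset.Icc 1 n) := by
    rw [T.shape.coe_nodes, Finset.coe_Icc]
    exact T.bijOn
  refine (Finset.sum_nbij T.entry hbij.mapsTo hbij.injOn hbij.surjOn fun A hA => ?_).symm
  rw [T.node_entry (Multipartition.mem_nodes.1 hA)]

end StdTableau

/-- The index set of the quantum integers in `γ_{t^μ}`: the pairs of a node `A` of `μ` and a row
start `B` below it, to which the factor `[nodeContent κ A - nodeContent κ B]_t` is attached. -/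
def rowStartPairs {ℓ n : ℕ} (μ : Multipartition ℓ n) : Finset (Σ _ : Node, Node) :=
  μ.nodes.sigma (rowStartsBelow ℓ)

lemma degE_eq_card_rowStartPairs {ℓ n e : ℕ} (he : e ≠ 1) (κ : ℕ → ℤ) (T : StdTableau ℓ n)
    (hT : T.entry = tlamEntry T.shape) :
    degE e κ T = Finset.card {P ∈ rowStartPairs T.shape |
      (e : ℤ) ∣ nodeContent κ P.1 - nodeContent κ P.2} := by
  have hdeg := T.sum_Icc_node fun k A =>
    dNode ℓ e κ {B | B ∈ T.shape.diagram ∧ T.entry B ≤ k} A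
  rw [degE, hdeg, rowStartPairs, Finset.filter_sigma, Finset.card_sigma, Nat.cast_sum]
  refine Finset.sum_congr rfl fun A hA => ?_
  rw [Multipartition.mem_nodes] at hA
  rw [hT, Multipartition.setOf_tlamEntry_le hA, Multipartition.dNode_initialSegment he κ hA]

lemma prod_Icc_one_natCast {M : Type*} [CommMonoid M] (f : ℤ → M) (k : ℕ) :
    ∏ j ∈ Finset.Icc 1 k, f j = ∏ c ∈ Finset.range k, f (c + 1) := by
  rw [Finset.range_eq_Ico, ← Finset.Ico_add_one_right_eq_Icc, ← Finset.prod_Ico_add' _ 0 k 1]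
  simp only [Nat.cast_add, Nat.cast_one]

lemma prod_rowStartPairs {ℓ n : ℕ} {M : Type*} [CommMonoid M] (κ : ℕ → ℤ)
    (μ : Multipartition ℓ n) (f : ℤ → M) :
    ∏ P ∈ rowStartPairs μ, f (nodeContent κ P.1 - nodeContent κ P.2) =
      (∏ l ∈ Finset.range ℓ, ∏ r ∈ Finset.range n, ∏ j ∈ Finset.Icc 1 (μ.part l r), f j) *
        ∏ l ∈ Finset.range ℓ, ∏ m ∈ Finset.Ioo l ℓ, ∏ r ∈ Finset.range n,
          ∏ c ∈ Finset.range (μ.part l r), f (κ l - r + c - κ m) := by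
  have next_row : ∀ A : Node,
      nodeContent κ A - nodeContent κ (A.1, A.2.1 + 1, 0) = A.2.2 + 1 := fun A => by
    simp only [nodeContent]
    push_cast
    ring
  have later_component : ∀ (A : Node) (m : ℕ),
      nodeContent κ A - nodeContent κ (m, 0, 0) = κ A.1 - A.2.1 + A.2.2 - κ m := fun A m => by
    simp only [nodeContent]
    push_cast
    ring
  have comm : ∀ l, ∏ m ∈ Finset.Ioo l ℓ, ∏ r ∈ Finset.range n, ∏ c ∈ Finset.range (μ.part l r),
      f (κ l - r + c - κ m) = ∏ r ∈ Finset.range n, ∏ c ∈ Finset.range (μ.part l r),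
        ∏ m ∈ Finset.Ioo l ℓ, f (κ l - r + c - κ m) := fun l => by
    rw [Finset.prod_comm]
    exact Finset.prod_congr rfl fun r _ => Finset.prod_comm
  rw [rowStartPairs, Finset.prod_sigma]
  simp only [prod_rowStartsBelow, next_row, later_component, Multipartition.prod_nodes, comm,
    Finset.prod_mul_distrib, prod_Icc_one_natCast]

/-- At a root `x` of `Φ_e` the integer power takes no junk value: by `degE_eq_card_rowStartPairs`
the exponents `degE e κ T` are natural numbers. -/
theorem gamma_tlam_cyclotomic_general {K : Type*} [Field K] (x : K) {n ℓ : ℕ} (κ : ℕ → ℤ)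
    (T : StdTableau ℓ n) (hT : T.entry = tlamEntry T.shape)
    (hκ : ∀ A ∈ T.shape.diagram, ∀ m ∈ Finset.Ioo A.1 ℓ, 0 < nodeContent κ A - κ m) :
    (∏ l ∈ Finset.range ℓ, ∏ r ∈ Finset.range n, ∏ j ∈ Finset.Icc 1 (T.shape.part l r),
        qint x (j : ℤ)) *
      (∏ l ∈ Finset.range ℓ, ∏ m ∈ Finset.Ioo l ℓ, ∏ r ∈ Finset.range n,
        ∏ c ∈ Finset.range (T.shape.part l r), qint x (κ l - (r : ℤ) + (c : ℤ) - κ m)) =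
    ∏ᶠ (e : ℕ) (_ : 2 ≤ e), (Polynomial.cyclotomic e K).eval x ^ degE e κ T := by
  have distance_pos : ∀ P ∈ rowStartPairs T.shape, 0 < nodeContent κ P.1 - nodeContent κ P.2 := by
    rintro ⟨A, B⟩ hP
    obtain ⟨hA, hB⟩ := Finset.mem_sigma.1 hP
    exact nodeContent_sub_pos_of_mem_rowStartsBelow (hκ A (Multipartition.mem_nodes.1 hA)) hB
  rw [← prod_rowStartPairs, prod_qint_eq_finprod_cyclotomic x _ _ distance_pos]
  refine finprod_congr fun e => finprod_congr fun he => ?_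
  rw [degE_eq_card_rowStartPairs (by omega) κ T hT, zpow_natCast]

lemma lt_sub_of_forall_lt_sub_succ {ℓ : ℕ} {a : ℤ} (ha : 0 ≤ a) {κ : ℕ → ℤ}
    (hκ : ∀ l, l + 1 < ℓ → a < κ l - κ (l + 1)) {l m : ℕ} (hlm : l < m) (hm : m < ℓ) :
    a < κ l - κ m := by
  induction m, hlm using Nat.le_induction with
  | base => exact hκ l hm
  | succ m _ ih =>
    have := ih (by omega)
    have := hκ m hm
    omega

lemma nodeContent_sub_pos {n ℓ : ℕ} {κ : ℕ → ℤ}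
    (hκ : ∀ l, l + 1 < ℓ → (n : ℤ) < κ l - κ (l + 1)) (μ : Multipartition ℓ n) :
    ∀ A ∈ μ.diagram, ∀ m ∈ Finset.Ioo A.1 ℓ, 0 < nodeContent κ A - κ m := by
  intro A hA m hm
  obtain ⟨hAm, hmℓ⟩ := Finset.mem_Ioo.1 hm
  have hgap := lt_sub_of_forall_lt_sub_succ (Int.natCast_nonneg n) hκ hAm hmℓ
  have hrow := Multipartition.row_lt hA
  simp only [nodeContent]
  omega

/-- for a multicharge with `κ_l - κ_{l+1} > n` and `λ` an
`ℓ`-multipartition of `n`, the seminormal coefficient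
`γ_{t^λ} = [λ]!_t ∏_{l<m} ∏_{(l,r,c) ∈ [λ]} [κ_l - r + c - κ_m]_t` of the Murphy
basis equals `∏_{e ≥ 2} Φ_e(t)^{deg_e(t^λ)}` (an identity of elements of `ℤ[t]`,
stated in its fraction field). -/
theorem gamma_tlam_cyclotomic (n ℓ : ℕ) (hℓ : 1 ≤ ℓ) (κ : ℕ → ℤ)
    (hκ : ∀ l, l + 1 < ℓ → (n : ℤ) < κ l - κ (l + 1))
    (μ : Multipartition ℓ n) (T : StdTableau ℓ n)
    (hT1 : T.shape = μ) (hT2 : T.entry = tlamEntry μ) :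
    (∏ l ∈ Finset.range ℓ, ∏ r ∈ Finset.range n, ∏ j ∈ Finset.Icc 1 (μ.part l r),
        qint xF (j : ℤ)) *
      (∏ l ∈ Finset.range ℓ, ∏ m ∈ Finset.Ioo l ℓ, ∏ r ∈ Finset.range n,
        ∏ c ∈ Finset.range (μ.part l r), qint xF (κ l - (r : ℤ) + (c : ℤ) - κ m)) =
    ∏ᶠ (e : ℕ) (_ : 2 ≤ e),
      (algebraMap (Polynomial ℤ) FF (Polynomial.cyclotomic e ℤ)) ^ (degE e κ T) := by
  subst hT1
  simpa only [eval_cyclotomic_xF] using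
    gamma_tlam_cyclotomic_general xF κ T hT2 (nodeContent_sub_pos hκ T.shape)

end Paper
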